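/- Let R be a ring. The following are equivalent: (1) R has a left Artinian left quotient ring Q = C⁻¹R; (2) (a) R̄ is a left Goldie ring, (b) n is a nilpotent ideal, (c) C' ⊆ C, (d) for all c ∈ C' and m ∈ n there exist elements c₁ ∈ C' and m₁ ∈ n such that c₁m = m₁c, and (e) R satisfies the ascending chain condition on C'-closed left ideals. -/

import Mathlib

open Function

universe u v

/-- A regular element of a ring: a two-sided non-zero-divisor. -/
def IsRegElem {R : Type*} [Ring R] (c : R) : Prop :=
  (∀ x : R, c * x = 0 → x = 0) ∧ (∀ x : R, x * c = 0 → x = 0)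

/-- The set `C` of regular elements of a ring. -/
def regSet (R : Type*) [Ring R] : Set R := {c : R | IsRegElem c}

/-- A (left) ideal is two-sided. -/
def Ideal.IsTwoSidedNC {R : Type*} [Ring R] (I : Ideal R) : Prop :=
  ∀ a ∈ I, ∀ r : R, a * r ∈ I

/-- A prime (two-sided) ideal of a possibly noncommutative ring. -/
def Ideal.IsPrimeNC {R : Type*} [Ring R] (P : Ideal R) : Prop :=
  P ≠ ⊤ ∧ P.IsTwoSidedNC ∧ ∀ a b : R, (∀ r : R, a * r * b ∈ P) → a ∈ P ∨ b ∈ P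

/-- The prime radical `n` of a ring: the intersection of all prime ideals. -/
def primeRadical (R : Type*) [Ring R] : Ideal R := sInf {P : Ideal R | P.IsPrimeNC}

/-- `n` is a nilpotent ideal. -/
def IsNilpotentIdeal {R : Type*} [Ring R] (I : Ideal R) : Prop := ∃ k : ℕ, I ^ (k + 1) = ⊥

/-- `φ : R →+* Q` realizes `Q` as a left quotient ring `C⁻¹R` of `R`:  `R` embeds in `Q`,
every regular element of `R` becomes invertible in `Q`, and every element of `Q` has the
form `(φ c)⁻¹ * (φ r)` with `c` regular. -/
structure IsLeftQuotRing {R : Type u} {Q : Type v} [Ring R] [Ring Q] (φ : R →+* Q) : Prop where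
  inj : Function.Injective φ
  isUnit : ∀ c : R, IsRegElem c → IsUnit (φ c)
  denom : ∀ q : Q, ∃ c r : R, IsRegElem c ∧ φ c * q = φ r

/-- Data of a left quotient ring of `R`. -/
structure LeftQuotData (R : Type u) [Ring R] : Type (u + 1) where
  Q : Type u
  [instQ : Ring Q]
  φ : R →+* Q
  quot : IsLeftQuotRing φ

attribute [instance] LeftQuotData.instQ

/-- `R` has a left Artinian left quotient ring `Q = C⁻¹R`. -/
def HasArtinianLeftQuot (R : Type u) [Ring R] : Prop :=
  ∃ d : LeftQuotData R, IsArtinianRing d.Q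

/-- A subset of a ring is a left annihilator. -/
def IsLeftAnnihilatorSet {R : Type*} [Ring R] (A : Set R) : Prop :=
  ∃ S : Set R, A = {r : R | ∀ s ∈ S, r * s = 0}

/-- The ascending chain condition on left annihilators. -/
def ACCLeftAnnihilators (R : Type*) [Ring R] : Prop :=
  ∀ f : ℕ → Set R, (∀ i, IsLeftAnnihilatorSet (f i)) → (∀ i j, i ≤ j → f i ⊆ f j) →
    ∃ N, ∀ k, N ≤ k → f k = f N

/-- The module `M` contains no infinite direct sum of nonzero submodules. -/
def NoInfiniteIndepFamily (R : Type*) (M : Type*) [Ring R] [AddCommGroup M] [Module R M] : Prop :=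
  ¬ ∃ f : ℕ → Submodule R M, (∀ i, f i ≠ ⊥) ∧ iSupIndep f

/-- A left Goldie ring: ACC on left annihilators and no infinite direct sums of nonzero
left ideals. -/
def IsLeftGoldie (R : Type*) [Ring R] : Prop :=
  ACCLeftAnnihilators R ∧ NoInfiniteIndepFamily R R

/-- The subquotient `n^i/n^{i+1}` of `R` determined by the prime radical `n`. -/
abbrev grPiece (R : Type*) [Ring R] (i : ℕ) :=
  ↥(primeRadical R ^ i) ⧸
    (Submodule.comap (primeRadical R ^ i : Ideal R).subtype (primeRadical R ^ (i + 1)))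

/-- The class of `x ∈ n^i` in `n^i/n^{i+1}`. -/
def grMk {R : Type*} [Ring R] (i : ℕ) (x : R) (hx : x ∈ primeRadical R ^ i) : grPiece R i :=
  Submodule.Quotient.mk ⟨x, hx⟩

/-- The `C̄`-torsion submodule `τ_i` of `n^i/n^{i+1}` (take the span, which coincides with the
set of torsion elements whenever the latter is a submodule, e.g. when `C̄` is a left Ore set);
here `C̄` is represented through `π : R → R̄` as `{c : R | IsRegElem (π c)}`. -/
def tauSub {R : Type u} {Rbar : Type v} [Ring R] [Ring Rbar] (π : R →+* Rbar) (i : ℕ) :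
    Submodule R (grPiece R i) :=
  Submodule.span R {u : grPiece R i | ∃ c : R, IsRegElem (π c) ∧ c • u = 0}

/-- The `C̄`-torsionfree module `f_i = (n^i/n^{i+1})/τ_i`. -/
abbrev fMod {R : Type u} {Rbar : Type v} [Ring R] [Ring Rbar] (π : R →+* Rbar) (i : ℕ) :=
  grPiece R i ⧸ tauSub π i

/-- The class of `x ∈ n^i` in `f_i`. -/
def fMk {R : Type u} {Rbar : Type v} [Ring R] [Ring Rbar] (π : R →+* Rbar) (i : ℕ) (x : R)
    (hx : x ∈ primeRadical R ^ i) : fMod π i :=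
  Submodule.Quotient.mk (grMk i x hx)

/-- The subset `C⁻¹K = {(φ c)⁻¹ (φ a) : c ∈ C, a ∈ K}` of a left quotient ring. -/
def locSet {R : Type u} {Q : Type v} [Ring R] [Ring Q] (φ : R →+* Q) (K : Ideal R) : Set Q :=
  {q : Q | ∃ c a : R, IsRegElem c ∧ a ∈ K ∧ φ c * q = φ a}

/-- A subset of a ring is a left Ore set (multiplicatively closed and satisfying the left
Ore condition). -/
def IsLeftOreSubset {A : Type*} [Ring A] (S : Set A) : Prop :=
  (1 : A) ∈ S ∧ (∀ s ∈ S, ∀ t ∈ S, s * t ∈ S) ∧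
    ∀ s ∈ S, ∀ a : A, ∃ t ∈ S, ∃ b : A, t * a = b * s

/-- A left denominator set. -/
def IsLeftDenominatorSet {A : Type*} [Ring A] (S : Set A) : Prop :=
  IsLeftOreSubset S ∧ ∀ a : A, ∀ s ∈ S, a * s = 0 → ∃ t ∈ S, t * a = 0


/-- A left ideal `J` of `R` is `S`-closed: `c * r ∈ J` with `c ∈ S` implies `r ∈ J`. -/
def IsSClosedLeftIdeal {R : Type*} [Ring R] (S : Set R) (J : Ideal R) : Prop :=
  ∀ c ∈ S, ∀ r : R, c * r ∈ J → r ∈ J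

section Independence

/-- A family of submodules indexed by a linear order is independent as soon as each member is
disjoint from the sum of the later ones. -/
theorem iSupIndep_of_disjoint_iSup_gt {ι A M : Type*} [LinearOrder ι] [Ring A] [AddCommGroup M]
    [Module A M] {f : ι → Submodule A M} (h : ∀ k, Disjoint (f k) (⨆ j > k, f j)) :
    iSupIndep f := by
  classical
  rw [iSupIndep_iff_finsetSum_eq_zero_imp_eq_zero]
  intro s v hv hsum
  by_contra! hne
  obtain ⟨i, his, hi⟩ := hne
  have hT : (s.filter fun i => v i ≠ 0).Nonempty := ⟨i, Finset.mem_filter.2 ⟨his, hi⟩⟩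
  set T := s.filter fun i => v i ≠ 0 with hTdef
  set k := T.min' hT
  have hkT : k ∈ T := T.min'_mem hT
  have hk := Finset.mem_filter.1 hkT
  have hsumT : v k + ∑ j ∈ T.erase k, v j = 0 := by
    rw [Finset.add_sum_erase _ _ hkT, hTdef, Finset.sum_filter_ne_zero, hsum]
  refine hk.2 (Submodule.disjoint_def.1 (h k) _ (hv k hk.1) ?_)
  rw [eq_neg_of_add_eq_zero_left hsumT]
  refine neg_mem (sum_mem fun j hj => ?_)
  have hj' := Finset.mem_erase.1 hj
  have hlt : k < j := lt_of_le_of_ne (T.min'_le j hj'.2) (Ne.symm hj'.1)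
  exact Submodule.mem_iSup_of_mem j
    (Submodule.mem_iSup_of_mem hlt (hv j (Finset.mem_filter.1 hj'.2).1))

theorem iSupIndep_of_disjoint_iSup_lt {ι A M : Type*} [LinearOrder ι] [Ring A] [AddCommGroup M]
    [Module A M] {f : ι → Submodule A M} (h : ∀ k, Disjoint (f k) (⨆ j < k, f j)) :
    iSupIndep f :=
  iSupIndep_of_disjoint_iSup_gt (ι := ιᵒᵈ) h

/-- `N` arises from `K` by adding a nonzero direct summand. -/
def IsDirectExtension {A M : Type*} [Ring A] [AddCommGroup M] [Module A M]
    (N K : Submodule A M) : Prop :=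
  ∃ D : Submodule A M, D ≠ ⊥ ∧ Disjoint D K ∧ N = K ⊔ D

theorem NoInfiniteIndepFamily.wellFounded {A M : Type*} [Ring A] [AddCommGroup M] [Module A M]
    (h : NoInfiniteIndepFamily A M) :
    WellFounded (IsDirectExtension (A := A) (M := M)) := by
  rw [wellFounded_iff_isEmpty_descending_chain]
  refine ⟨fun ⟨f, hf⟩ => h ?_⟩
  choose D hD hdisj heq using hf
  have hmono : Monotone f := monotone_nat_of_le_succ fun n => heq n ▸ le_sup_left
  refine ⟨D, hD, iSupIndep_of_disjoint_iSup_lt fun k => (hdisj k).mono_right ?_⟩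
  refine iSup₂_le fun j hj => ?_
  have hle : D j ≤ f (j + 1) := heq j ▸ le_sup_right
  exact hle.trans (hmono hj)

end Independence

section Goldie

variable {A : Type*} [Ring A]

/-- A ring is semiprime if `aAa = 0` implies `a = 0`. -/
def IsSemiprimeElementwise (A : Type*) [Ring A] : Prop :=
  ∀ a : A, (∀ r : A, a * r * a = 0) → a = 0

/-- An essential left ideal. -/
def IsEssentialLeftIdeal (E : Ideal A) : Prop := ∀ I : Ideal A, Disjoint E I → I = ⊥

/-- The left annihilator of an element. -/
def leftAnn (a : A) : Ideal A := LinearMap.ker (LinearMap.toSpanSingleton A A a)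

theorem mem_leftAnn {a r : A} : r ∈ leftAnn a ↔ r * a = 0 := by
  simp [leftAnn]

theorem IsEssentialLeftIdeal.mono {E F : Ideal A} (h : IsEssentialLeftIdeal E) (hle : E ≤ F) :
    IsEssentialLeftIdeal F :=
  fun I hI => h I (hI.mono_left hle)

theorem ACCLeftAnnihilators.exists_max (h : ACCLeftAnnihilators A) {T : Set A}
    (hT : T.Nonempty) : ∃ a ∈ T, ∀ b ∈ T, leftAnn a ≤ leftAnn b → leftAnn b ≤ leftAnn a := by
  have wf : WellFounded fun b a : A => leftAnn a < leftAnn b := by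
    rw [wellFounded_iff_isEmpty_descending_chain]
    refine ⟨fun ⟨f, hf⟩ => ?_⟩
    have hs : StrictMono fun n => leftAnn (f n) := strictMono_nat_of_lt_succ hf
    obtain ⟨N, hN⟩ := h (fun n => (leftAnn (f n) : Set A))
      (fun n => ⟨{f n}, by ext r; simp [mem_leftAnn]⟩) (fun i j hij => hs.monotone hij)
    exact (hs (Nat.lt_succ_self N)).ne' (SetLike.coe_injective (hN (N + 1) (Nat.le_succ N)))
  obtain ⟨a, haT, ha⟩ := wf.has_min T hT
  exact ⟨a, haT, fun b hb hle => not_lt_iff_le_imp_ge.1 (ha b hb) hle⟩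

/-- In a semiprime ring with the ascending chain condition on left annihilators, no nonzero
principal right ideal is nil. -/
theorem exists_not_isNilpotent_mul (hacc : ACCLeftAnnihilators A)
    (hsp : IsSemiprimeElementwise A) {a : A} (ha : a ≠ 0) : ∃ x, ¬ IsNilpotent (a * x) := by
  by_contra! hnil
  obtain ⟨b, ⟨hb0, y, rfl⟩, hmax⟩ := hacc.exists_max (T := {b | b ≠ 0 ∧ ∃ x, b = a * x})
    ⟨a, ha, 1, (mul_one a).symm⟩
  refine hb0 (hsp _ fun x => ?_)
  set b := a * y
  by_cases hbx : b * x = 0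
  · rw [hbx, zero_mul]
  have hn : IsNilpotent (b * x) := by simpa [b, mul_assoc] using hnil (y * x)
  unfold IsNilpotent at hn
  obtain ⟨k, hk⟩ : ∃ k, (b * x) ^ (k + 1) ≠ 0 ∧ (b * x) ^ (k + 2) = 0 := by
    classical
    have hlt : 2 ≤ Nat.find hn := by
      rw [Nat.le_find_iff]
      intro m hm
      interval_cases m
      · intro h1
        exact hbx (by rw [← mul_one (b * x), ← pow_zero (b * x), h1, mul_zero])
      · simpa using hbx
    refine ⟨Nat.find hn - 2, Nat.find_min hn (by omega), ?_⟩
    have := Nat.find_spec hn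
    rwa [show Nat.find hn - 2 + 2 = Nat.find hn by omega]
  have hpow : (b * x) ^ (k + 1) = b * (x * (b * x) ^ k) := by rw [pow_succ', mul_assoc]
  have hle := hmax ((b * x) ^ (k + 1)) ⟨hk.1, y * (x * (b * x) ^ k), by rw [hpow, mul_assoc]⟩
    fun r hr => by
      rw [mem_leftAnn] at hr ⊢
      rw [hpow, ← mul_assoc, hr, zero_mul]
  exact mem_leftAnn.1 (hle (mem_leftAnn.2 (by rw [← pow_succ']; exact hk.2)))

theorem exists_pow_stable (hacc : ACCLeftAnnihilators A) (x : A) :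
    ∃ k, ∀ r, r * (x ^ (k + 1) * x ^ (k + 1)) = 0 → r * x ^ (k + 1) = 0 := by
  obtain ⟨_, ⟨k, rfl⟩, hmax⟩ := hacc.exists_max (Set.range_nonempty fun k : ℕ => x ^ (k + 1))
  simp only [Set.forall_mem_range] at hmax
  refine ⟨k, fun r hr => ?_⟩
  have hsq : x ^ (k + 1) * x ^ (k + 1) = x ^ (2 * k + 1 + 1) := by
    rw [← pow_add]; congr 1; omega
  rw [hsq] at hr
  refine mem_leftAnn.1 (hmax (2 * k + 1) (fun s hs => ?_) (mem_leftAnn.2 hr))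
  rw [mem_leftAnn] at hs ⊢
  rw [← hsq, ← mul_assoc, hs, zero_mul]

/-- The left singular ideal of a semiprime ring with the ascending chain condition on left
annihilators is zero. -/
theorem eq_zero_of_isEssential_leftAnn (hacc : ACCLeftAnnihilators A)
    (hsp : IsSemiprimeElementwise A) {z : A} (hz : IsEssentialLeftIdeal (leftAnn z)) : z = 0 := by
  by_contra h0
  obtain ⟨x, hx⟩ := exists_not_isNilpotent_mul hacc hsp h0
  obtain ⟨k, hk⟩ := exists_pow_stable hacc (z * x)
  have hess : IsEssentialLeftIdeal (leftAnn ((z * x) ^ (k + 1))) := hz.mono fun r hr => by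
    rw [mem_leftAnn] at hr ⊢
    rw [pow_succ', ← mul_assoc, ← mul_assoc, hr, zero_mul, zero_mul]
  have hbot := hess (Ideal.span {(z * x) ^ (k + 1)}) <| Submodule.disjoint_def.2 fun y hy hy' => by
    obtain ⟨r, rfl⟩ := Ideal.mem_span_singleton'.1 hy'
    exact hk r (by rw [← mul_assoc]; exact mem_leftAnn.1 hy)
  exact hx ⟨k + 1, Ideal.span_singleton_eq_bot.1 hbot⟩

theorem exists_stable_mem (hacc : ACCLeftAnnihilators A) (hsp : IsSemiprimeElementwise A)
    {D : Ideal A} (hD : D ≠ ⊥) : ∃ d ∈ D, d ≠ 0 ∧ ∀ r, r * (d * d) = 0 → r * d = 0 := by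
  obtain ⟨a, haD, ha⟩ := Submodule.exists_mem_ne_zero_of_ne_bot hD
  obtain ⟨x, hx⟩ := exists_not_isNilpotent_mul hacc hsp ha
  have hx' : ¬ IsNilpotent (x * a) := by
    rintro ⟨k, hk⟩
    refine hx ⟨k + 1, ?_⟩
    have hcomm : ∀ k : ℕ, (a * x) ^ (k + 1) = a * (x * a) ^ k * x := fun k => by
      induction k with
      | zero => simp
      | succ k ih => rw [pow_succ, ih, pow_succ]; simp only [mul_assoc]
    rw [hcomm, hk, mul_zero, zero_mul]
  obtain ⟨k, hk⟩ := exists_pow_stable hacc (x * a)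
  exact ⟨_, D.pow_mem_of_mem (D.mul_mem_left x haD) _ k.succ_pos, fun h => hx' ⟨_, h⟩, hk⟩

/-- In a ring of finite left uniform dimension, the principal left ideal of an element with zero
left annihilator is essential. -/
theorem isEssential_span_of_leftAnn (hdim : NoInfiniteIndepFamily A A) {c : A}
    (hc : ∀ r, r * c = 0 → r = 0) : IsEssentialLeftIdeal (Ideal.span {c}) := by
  intro I hI
  by_contra hne
  have hcpow : ∀ (k : ℕ) r, r * c ^ k = 0 → r = 0 := fun k => by
    induction k with
    | zero => simp
    | succ k ih =>
      intro r hr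
      exact ih r (hc _ (by rwa [mul_assoc, ← pow_succ]))
  refine hdim ⟨fun k => Submodule.map (LinearMap.toSpanSingleton A A (c ^ k)) I, fun k hk => hne ?_,
    iSupIndep_of_disjoint_iSup_gt fun k => ?_⟩
  · refine (Submodule.eq_bot_iff _).2 fun x hx => hcpow k x ?_
    have := Submodule.mem_map_of_mem (f := LinearMap.toSpanSingleton A A (c ^ k)) hx
    dsimp only at hk
    rw [hk] at this
    simpa using this
  · have hle : (⨆ j > k, Submodule.map (LinearMap.toSpanSingleton A A (c ^ j)) I) ≤
        Ideal.span {c ^ (k + 1)} := by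
      refine iSup₂_le fun j hj => ?_
      rintro _ ⟨x, -, rfl⟩
      obtain ⟨m, rfl⟩ := Nat.exists_eq_add_of_le (Nat.succ_le_of_lt hj)
      refine Ideal.mem_span_singleton'.2 ⟨x * c ^ m, ?_⟩
      rw [mul_assoc, ← pow_add, add_comm]
      simp
    refine Disjoint.mono_right hle (Submodule.disjoint_def.2 ?_)
    rintro _ ⟨x, hx, rfl⟩ hy
    obtain ⟨r, hr⟩ := Ideal.mem_span_singleton'.1 hy
    have hxr : r * c = x := by
      refine sub_eq_zero.1 (hcpow k _ ?_)
      rw [sub_mul, mul_assoc, ← pow_succ', hr]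
      simp
    have hx0 : x = 0 := Submodule.disjoint_def.1 hI x
      (Ideal.mem_span_singleton'.2 ⟨r, hxr⟩) hx
    simp [hx0]

/-- **Goldie**: an essential left ideal of a semiprime left Goldie ring contains a regular
element. -/
theorem exists_isRegElem_mem (hG : IsLeftGoldie A) (hsp : IsSemiprimeElementwise A)
    {E : Ideal A} (hE : IsEssentialLeftIdeal E) : ∃ c ∈ E, IsRegElem c := by
  obtain ⟨hacc, hdim⟩ := hG
  obtain ⟨M, ⟨c, hcE, hcc, hM⟩, hmin⟩ := hdim.wellFounded.has_min
    {M : Ideal A | ∃ c ∈ E, (∀ r, r * (c * c) = 0 → r * c = 0) ∧ ∀ y ∈ M, y * c = 0 → y = 0}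
    ⟨⊥, 0, E.zero_mem, by simp, by simp⟩
  have hinf : leftAnn c ⊓ E = ⊥ := by
    by_contra hne
    obtain ⟨d, hd, hd0, hdd⟩ := exists_stable_mem hacc hsp hne
    have hdc : d * c = 0 := mem_leftAnn.1 hd.1
    refine hmin (M ⊔ Ideal.span {d}) ⟨c + d, E.add_mem hcE hd.2, fun r hr => ?_, ?_⟩
      ⟨_, fun h => hd0 (Ideal.span_singleton_eq_bot.1 h), Submodule.disjoint_def.2 ?_, rfl⟩
    · have h1 : r * (c * c + c * d + d * d) = 0 := by
        rw [← hr]; simp only [mul_add, add_mul, hdc, zero_add, add_assoc]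
      have h2 : r * c = 0 := by
        refine hcc r ?_
        rw [← mul_assoc]
        have h3 : r * c * (c * c) = 0 := by
          have := congrArg (· * c) h1
          simpa [mul_add, add_mul, mul_assoc, hdc] using this
        simpa [mul_assoc] using hcc _ h3
      have h4 : r * (d * d) = 0 := by
        simpa [mul_add, ← mul_assoc, h2] using h1
      rw [mul_add, h2, hdd r h4, add_zero]
    · intro y hy hy0
      obtain ⟨m, hm, s, hs, rfl⟩ := Submodule.mem_sup.1 hy
      obtain ⟨r, rfl⟩ := Ideal.mem_span_singleton'.1 hs
      have hmc : m * c = 0 := by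
        refine hcc m ?_
        have := congrArg (· * c) hy0
        simpa [mul_add, add_mul, mul_assoc, hdc] using this
      obtain rfl := hM m hm hmc
      have hrd : r * d = 0 := by
        refine hdd r ?_
        simpa [mul_add, add_mul, mul_assoc, hdc] using hy0
      simp [hrd]
    · intro x hx hxM
      obtain ⟨r, rfl⟩ := Ideal.mem_span_singleton'.1 hx
      exact hM _ hxM (by rw [mul_assoc, hdc, mul_zero])
  have hann : leftAnn c = ⊥ := hE _ (disjoint_iff.2 (by rw [inf_comm]; exact hinf))
  have hc : ∀ r, r * c = 0 → r = 0 := fun r hr => by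
    have : r ∈ leftAnn c := mem_leftAnn.2 hr
    rwa [hann] at this
  refine ⟨c, hcE, fun x hx => eq_zero_of_isEssential_leftAnn hacc hsp ?_, hc⟩
  refine (isEssential_span_of_leftAnn hdim hc).mono ?_
  rw [Ideal.span_singleton_le_iff_mem]
  exact mem_leftAnn.2 hx

/-- **Goldie**: the regular elements of a semiprime left Goldie ring satisfy the left Ore
condition. -/
theorem exists_mul_eq_mul_of_isRegElem (hG : IsLeftGoldie A) (hsp : IsSemiprimeElementwise A)
    {c : A} (hc : IsRegElem c) (a : A) : ∃ d b : A, IsRegElem d ∧ d * a = b * c := by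
  have hess := isEssential_span_of_leftAnn hG.2 hc.2
  have hcol : IsEssentialLeftIdeal
      (Submodule.comap (LinearMap.toSpanSingleton A A a) (Ideal.span {c})) := by
    intro I hI
    have hIa : Submodule.map (LinearMap.toSpanSingleton A A a) I = ⊥ := by
      refine hess _ (Submodule.disjoint_def.2 ?_)
      rintro _ hy ⟨x, hx, rfl⟩
      have hx0 : x = 0 := Submodule.disjoint_def.1 hI x hy hx
      simp [hx0]
    refine (Submodule.eq_bot_iff _).2 fun x hx => ?_
    refine Submodule.disjoint_def.1 hI x ?_ hx
    have := Submodule.mem_map_of_mem (f := LinearMap.toSpanSingleton A A a) hx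
    rw [hIa, Submodule.mem_bot] at this
    rw [Submodule.mem_comap, this]
    exact zero_mem _
  obtain ⟨d, hd, hdreg⟩ := exists_isRegElem_mem hG hsp hcol
  obtain ⟨b, hb⟩ := Ideal.mem_span_singleton'.1 hd
  exact ⟨d, b, hdreg, by simpa using hb.symm⟩

end Goldie

section Localization

variable {R : Type*} {Q : Type*} [Ring R] [Ring Q]

/-- `φ : R →+* Q` realizes `Q` as the left localization of `R` at a submonoid `S` consisting of
regular elements. -/
structure IsLeftLocalizationAt (S : Submonoid R) (φ : R →+* Q) : Prop where
  inj : Function.Injective φ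
  isUnit : ∀ c ∈ S, IsUnit (φ c)
  denom : ∀ q : Q, ∃ c ∈ S, ∃ r : R, φ c * q = φ r

namespace IsLeftLocalizationAt

variable {S : Submonoid R} {φ : R →+* Q}

theorem mem_of_mul_mem (h : IsLeftLocalizationAt S φ) {J : Ideal Q} {c : R} (hc : c ∈ S) {q : Q}
    (hq : φ c * q ∈ J) : q ∈ J :=
  (J.unit_mul_mem_iff_mem (h.isUnit c hc)).1 hq

theorem exists_denom_mul (h : IsLeftLocalizationAt S φ) (q : Q) {c : R} (hc : c ∈ S) :
    ∃ d ∈ S, ∃ b : R, φ d * q = φ b * φ c := by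
  obtain ⟨u, hu⟩ := h.isUnit c hc
  obtain ⟨d, hd, b, hb⟩ := h.denom (q * ↑u⁻¹)
  refine ⟨d, hd, b, ?_⟩
  rw [← hb, ← hu, mul_assoc, mul_assoc, Units.inv_mul, mul_one]

/-- The extension of a left ideal `I` consists of the fractions with numerator in `I`. -/
theorem mem_map_iff (h : IsLeftLocalizationAt S φ) {I : Ideal R} {q : Q} :
    q ∈ I.map φ ↔ ∃ c ∈ S, ∃ x ∈ I, φ c * q = φ x := by
  constructor
  · intro hq
    refine Submodule.span_induction (p := fun q _ => ∃ c ∈ S, ∃ x ∈ I, φ c * q = φ x)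
      ?_ ?_ ?_ ?_ hq
    · rintro _ ⟨x, hx, rfl⟩
      exact ⟨1, S.one_mem, x, hx, by simp⟩
    · exact ⟨1, S.one_mem, 0, I.zero_mem, by simp⟩
    · rintro q₁ q₂ - - ⟨c₁, hc₁, x₁, hx₁, h₁⟩ ⟨c₂, hc₂, x₂, hx₂, h₂⟩
      obtain ⟨d, hd, b, hb⟩ := h.exists_denom_mul (φ c₁) hc₂
      refine ⟨d * c₁, S.mul_mem hd hc₁, d * x₁ + b * x₂,
        I.add_mem (I.mul_mem_left d hx₁) (I.mul_mem_left b hx₂), ?_⟩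
      rw [mul_add, map_mul, map_add, map_mul, map_mul, mul_assoc, h₁, hb, mul_assoc, h₂]
    · rintro q' q - ⟨c, hc, x, hx, hx'⟩
      obtain ⟨d, hd, b, hb⟩ := h.exists_denom_mul q' hc
      refine ⟨d, hd, b * x, I.mul_mem_left b hx, ?_⟩
      rw [smul_eq_mul, ← mul_assoc, hb, mul_assoc, hx', map_mul]
  · rintro ⟨c, hc, x, hx, hq⟩
    exact h.mem_of_mul_mem hc (hq ▸ Ideal.mem_map_of_mem φ hx)

theorem map_mem_map_iff (h : IsLeftLocalizationAt S φ) {I : Ideal R} {r : R} :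
    φ r ∈ I.map φ ↔ ∃ c ∈ S, c * r ∈ I := by
  rw [h.mem_map_iff]
  constructor
  · rintro ⟨c, hc, x, hx, hcx⟩
    rw [← map_mul] at hcx
    exact ⟨c, hc, (h.inj hcx).symm ▸ hx⟩
  · rintro ⟨c, hc, hcr⟩
    exact ⟨c, hc, _, hcr, (map_mul φ c r).symm⟩

theorem isSClosed_comap (h : IsLeftLocalizationAt S φ) (J : Ideal Q) :
    IsSClosedLeftIdeal (S : Set R) (J.comap φ) :=
  fun c hc r hr => h.mem_of_mul_mem hc (by simpa using hr)

theorem comap_map_of_isSClosed (h : IsLeftLocalizationAt S φ) {I : Ideal R}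
    (hI : IsSClosedLeftIdeal (S : Set R) I) : (I.map φ).comap φ = I := by
  refine le_antisymm (fun r hr => ?_) Ideal.le_comap_map
  obtain ⟨c, hc, hcr⟩ := h.map_mem_map_iff.1 hr
  exact hI c hc r hcr

theorem map_comap (h : IsLeftLocalizationAt S φ) (J : Ideal Q) : (J.comap φ).map φ = J := by
  refine le_antisymm Ideal.map_comap_le fun q hq => ?_
  obtain ⟨c, hc, r, hr⟩ := h.denom q
  exact h.mem_map_iff.2 ⟨c, hc, r, by simpa [← hr] using J.mul_mem_left _ hq, hr⟩

theorem isNoetherianRing (h : IsLeftLocalizationAt S φ)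
    (hacc : ∀ f : ℕ → Ideal R, (∀ i, IsSClosedLeftIdeal (S : Set R) (f i)) →
      (∀ i j, i ≤ j → f i ≤ f j) → ∃ N, ∀ k, N ≤ k → f k = f N) : IsNoetherianRing Q := by
  rw [isNoetherianRing_iff, ← monotone_stabilizes_iff_noetherian]
  intro f
  obtain ⟨N, hN⟩ := hacc (fun i => Ideal.comap φ (f i)) (fun i => h.isSClosed_comap _)
    fun i j hij => Ideal.comap_mono (f.monotone hij)
  refine ⟨N, fun m hm => ?_⟩
  rw [← h.map_comap (f N), ← h.map_comap (f m)]
  exact congrArg _ (hN m hm).symm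

theorem acc_isSClosed (h : IsLeftLocalizationAt S φ) [IsNoetherianRing Q] (f : ℕ → Ideal R)
    (hf : ∀ i, IsSClosedLeftIdeal (S : Set R) (f i)) (hmono : ∀ i j, i ≤ j → f i ≤ f j) :
    ∃ N, ∀ k, N ≤ k → f k = f N := by
  obtain ⟨N, hN⟩ := monotone_stabilizes_iff_noetherian.2 (inferInstanceAs (IsNoetherian Q Q))
    ⟨fun i => (f i).map φ, fun i j hij => Ideal.map_mono (hmono i j hij)⟩
  refine ⟨N, fun k hk => ?_⟩
  rw [← h.comap_map_of_isSClosed (hf k), ← h.comap_map_of_isSClosed (hf N)]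
  exact congrArg _ (hN k hk).symm

/-- The extension of a two-sided ideal to a left Noetherian left localization is two-sided. -/
theorem map_mul_mem (h : IsLeftLocalizationAt S φ) [IsNoetherianRing Q] {I : Ideal R}
    (hI : I.IsTwoSidedNC) {x : Q} (hx : x ∈ I.map φ) (q : Q) : x * q ∈ I.map φ := by
  have hR : ∀ x ∈ I.map φ, ∀ r, x * φ r ∈ I.map φ := by
    intro x hx r
    obtain ⟨c, hc, y, hy, hxy⟩ := h.mem_map_iff.1 hx
    exact h.mem_map_iff.2 ⟨c, hc, y * r, hI y hy r, by rw [← mul_assoc, hxy, map_mul]⟩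
  obtain ⟨c, hc, r, hr⟩ := h.denom q
  obtain ⟨u, hu⟩ := h.isUnit c hc
  let f : ℕ →o Ideal Q := ⟨fun k => Submodule.comap (LinearMap.toSpanSingleton Q Q ((u : Q) ^ k))
    (I.map φ), monotone_nat_of_le_succ fun k y hy => by
      have := hR _ hy c
      simpa [pow_succ, ← mul_assoc, hu] using this⟩
  obtain ⟨N, hN⟩ := monotone_stabilizes_iff_noetherian.2 (inferInstanceAs (IsNoetherian Q Q)) f
  have hinv : ∀ x ∈ I.map φ, x * ↑u⁻¹ ∈ I.map φ := by
    intro x hx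
    have hmem : x * ↑(u⁻¹ ^ (N + 1)) ∈ f (N + 1) := by
      have : x * ↑(u⁻¹ ^ (N + 1)) * (u : Q) ^ (N + 1) = x := by
        rw [mul_assoc, ← Units.val_pow_eq_pow_val, ← Units.val_mul, inv_pow,
          inv_mul_cancel, Units.val_one, mul_one]
      change x * ↑(u⁻¹ ^ (N + 1)) * (u : Q) ^ (N + 1) ∈ I.map φ
      rwa [this]
    rw [← hN (N + 1) (Nat.le_succ N)] at hmem
    have : x * ↑(u⁻¹ ^ (N + 1)) * (u : Q) ^ N = x * ↑u⁻¹ := by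
      rw [mul_assoc, ← Units.val_pow_eq_pow_val, ← Units.val_mul, pow_succ', mul_assoc, inv_pow,
        inv_mul_cancel, mul_one]
    change x * ↑(u⁻¹ ^ (N + 1)) * (u : Q) ^ N ∈ I.map φ at hmem
    rwa [this] at hmem
  have hq : q = ↑u⁻¹ * φ r := by rw [← hr, ← hu, ← mul_assoc, Units.inv_mul, one_mul]
  rw [hq, ← mul_assoc]
  exact hR _ (hinv x hx) r

end IsLeftLocalizationAt

end Localization

section Radicals

variable {R : Type*} [Ring R]

theorem Ideal.IsPrimeNC.le_of_pow_le {P I : Ideal R} (hP : P.IsPrimeNC) :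
    ∀ k : ℕ, I.IsTwoSidedNC → I ^ (k + 1) ≤ P → I ≤ P
  | 0, _, h => by rwa [zero_add, Submodule.pow_one] at h
  | k + 1, hI, h => by
    by_contra hle
    obtain ⟨a, haI, haP⟩ := SetLike.not_le_iff_exists.1 hle
    refine hle (hP.le_of_pow_le k hI fun b hb => (hP.2.2 a b fun r => h ?_).resolve_left haP)
    rw [Submodule.pow_succ' _ k.succ_ne_zero]
    exact Ideal.mul_mem_mul (hI a haI r) hb

theorem le_primeRadical_of_pow_eq_bot {I : Ideal R} (hI : I.IsTwoSidedNC) {k : ℕ}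
    (h : I ^ (k + 1) = ⊥) : I ≤ primeRadical R :=
  le_sInf fun _ hP => hP.le_of_pow_le k hI (h ▸ bot_le)

theorem primeRadical_le_jacobson (R : Type*) [Ring R] : primeRadical R ≤ Ring.jacobson R := by
  rw [Ring.jacobson_eq_sInf_isMaximal]
  refine le_sInf fun m (hm : m.IsMaximal) => ?_
  let P : Ideal R :=
    { carrier := {a | ∀ r, a * r ∈ m}
      add_mem' := fun {a b} ha hb r => by rw [add_mul]; exact m.add_mem (ha r) (hb r)
      zero_mem' := fun r => by rw [zero_mul]; exact m.zero_mem
      smul_mem' := fun c a ha r => by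
        rw [smul_eq_mul, mul_assoc]; exact m.mul_mem_left c (ha r) }
  have hPm : P ≤ m := fun a ha => by simpa using ha 1
  refine le_trans (sInf_le (show P.IsPrimeNC from ⟨fun h => ?_, fun a ha r s => ?_, ?_⟩)) hPm
  · exact hm.ne_top (top_le_iff.1 (h ▸ hPm))
  · rw [mul_assoc]; exact ha _
  · intro a b hab
    by_contra! hne
    obtain ⟨r, hr⟩ : ∃ r, b * r ∉ m := by
      by_contra! hb
      exact hne.2 hb
    obtain ⟨t, s, hs, hts⟩ := hm.exists_inv hr
    refine hne.1 fun x => ?_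
    have hx : a * x = a * (x * t) * b * r + a * x * s :=
      calc a * x = a * x * (t * (b * r) + s) := by rw [hts, mul_one]
        _ = _ := by simp only [mul_add, mul_assoc]
    rw [hx]
    exact m.add_mem (hab _ r) (m.mul_mem_left _ hs)

/-- A left Noetherian ring is left Artinian if it is semisimple modulo a nilpotent ideal. -/
theorem isArtinianRing_of_exists_complement [IsNoetherianRing R] {N : Ideal R} {k : ℕ}
    (hnil : N ^ (k + 1) = ⊥)
    (hcompl : ∀ J, N ≤ J → ∃ K, N ≤ K ∧ J ⊓ K ≤ N ∧ J ⊔ K = ⊤) : IsArtinianRing R := by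
  have hle : N ≤ Ring.jacobson R := by
    rw [Ring.jacobson_eq_sInf_isMaximal]
    refine le_sInf fun m (hm : m.IsMaximal) => ?_
    by_contra hNm
    have htop : N ⊔ m = ⊤ := by
      rw [sup_comm]
      exact hm.1.2 _ (left_lt_sup.2 hNm)
    obtain ⟨x, hx, y, hy, hxy⟩ := Submodule.mem_sup.1 (htop ▸ Submodule.mem_top (x := (1 : R)))
    have hxnil : IsNilpotent x := ⟨k + 1, by
      have := Ideal.pow_mem_pow hx (k + 1)
      rwa [hnil] at this⟩
    refine hm.ne_top (Ideal.eq_top_of_isUnit_mem m hy ?_)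
    rw [eq_sub_of_add_eq' hxy]
    exact hxnil.isUnit_one_sub
  have hsup : ∀ K : Ideal R, Ring.jacobson R ⊔ K = ⊤ → K = ⊤ := by
    intro K hK
    by_contra hne
    obtain ⟨m, hm, hKm⟩ := Ideal.exists_le_maximal K hne
    exact hm.ne_top (top_le_iff.1 (hK ▸ sup_le (Ring.jacobson_le_of_isMaximal m) hKm))
  obtain rfl : N = Ring.jacobson R := by
    refine le_antisymm hle ?_
    obtain ⟨K, -, hinf, htop⟩ := hcompl _ hle
    rw [hsup K htop, inf_top_eq] at hinf
    exact hinf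
  have : ComplementedLattice (Set.Ici (Ring.jacobson R)) := ⟨fun ⟨J, hJ⟩ => by
    obtain ⟨K, hNK, hinf, htop⟩ := hcompl J hJ
    refine ⟨⟨K, hNK⟩, ?_, ?_⟩
    · rw [disjoint_iff]
      exact Subtype.ext (le_antisymm hinf (le_inf hJ hNK))
    · rw [codisjoint_iff]
      exact Subtype.ext htop⟩
  have hss : IsSemisimpleModule R (R ⧸ Ring.jacobson R) :=
    (isSemisimpleModule_iff _ _).2
      ((Submodule.comapMkQRelIso (Ring.jacobson R)).complementedLattice_iff.2 this)
  let e : (R ⧸ Ring.jacobson R) →ₛₗ[Ideal.Quotient.mk (Ring.jacobson R)]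
      (R ⧸ Ring.jacobson R) :=
    { AddMonoidHom.id _ with
      map_smul' := fun r x => by
        obtain ⟨x, rfl⟩ := Ideal.Quotient.mk_surjective x
        rfl }
  have : RingHomSurjective (Ideal.Quotient.mk (Ring.jacobson R)) :=
    ⟨Ideal.Quotient.mk_surjective⟩
  have : IsSemiprimaryRing R :=
    ⟨(e.isSemisimpleModule_iff_of_bijective Function.bijective_id).1 hss, k + 1, hnil⟩
  exact (IsSemiprimaryRing.isNoetherian_iff_isArtinian).1 inferInstance

end Radicals

section Criterion

variable {R Q Rbar : Type*} [Ring R] [Ring Q] [Ring Rbar]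

theorem isRegElem_mul {a b : R} (ha : IsRegElem a) (hb : IsRegElem b) : IsRegElem (a * b) :=
  ⟨fun x hx => hb.1 x (ha.1 _ (by rwa [← mul_assoc])),
    fun x hx => ha.2 x (hb.2 _ (by rwa [mul_assoc]))⟩

/-- The submonoid of regular elements. -/
def regSubmonoid (R : Type*) [Ring R] : Submonoid R where
  carrier := regSet R
  one_mem' := ⟨fun x hx => by simpa using hx, fun x hx => by simpa using hx⟩
  mul_mem' := isRegElem_mul

theorem isTwoSidedNC_ker (π : R →+* Rbar) : (RingHom.ker π).IsTwoSidedNC := fun a ha r => by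
  rw [RingHom.mem_ker] at ha ⊢
  rw [map_mul, ha, zero_mul]

theorem isSemiprimeElementwise_of_ker_eq {π : R →+* Rbar} (hπ : Function.Surjective π)
    (hker : RingHom.ker π = primeRadical R) : IsSemiprimeElementwise Rbar := by
  intro a ha
  obtain ⟨a, rfl⟩ := hπ a
  rw [← RingHom.mem_ker, hker]
  refine Submodule.mem_sInf.2 fun P hP => or_self_iff.1 (hP.2.2 a a fun r => ?_)
  have : a * r * a ∈ primeRadical R := by
    rw [← hker, RingHom.mem_ker, map_mul, map_mul]
    exact ha _
  exact Submodule.mem_sInf.1 this P hP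

namespace IsLeftLocalizationAt

variable {S : Submonoid R} {φ : R →+* Q} {π : R →+* Rbar}

theorem map_pow_le (h : IsLeftLocalizationAt S φ) [IsNoetherianRing Q] {I : Ideal R}
    (hI : I.IsTwoSidedNC) : ∀ k : ℕ, (I.map φ) ^ (k + 1) ≤ (I ^ (k + 1)).map φ
  | 0 => by rw [zero_add, Submodule.pow_one, Submodule.pow_one]
  | k + 1 => by
    rw [Submodule.pow_succ' _ k.succ_ne_zero, Submodule.pow_succ' I k.succ_ne_zero]
    refine Ideal.mul_le.2 fun x hx y hy => ?_
    have hy' := h.map_pow_le hI k hy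
    refine Submodule.span_induction
      (p := fun y _ => ∀ x ∈ I.map φ, x * y ∈ (I * I ^ (k + 1)).map φ) ?_ ?_ ?_ ?_ hy' x hx
    · rintro _ ⟨b, hb, rfl⟩ x hx
      obtain ⟨c, hc, m, hm, hcx⟩ := h.mem_map_iff.1 hx
      exact h.mem_map_iff.2 ⟨c, hc, m * b, Ideal.mul_mem_mul hm hb, by
        rw [← mul_assoc, hcx, map_mul]⟩
    · intro x _
      rw [mul_zero]
      exact zero_mem _
    · intro y z _ _ hy hz x hx
      rw [mul_add]
      exact add_mem (hy x hx) (hz x hx)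
    · intro q y _ hy x hx
      rw [smul_eq_mul, ← mul_assoc]
      exact hy _ (h.map_mul_mem hI hx q)

theorem exists_complement (h : IsLeftLocalizationAt S φ) [IsNoetherianRing Q]
    (hS : ∀ c, c ∈ S ↔ IsRegElem (π c)) (hπ : Function.Surjective π) (hG : IsLeftGoldie Rbar)
    (hsp : IsSemiprimeElementwise Rbar) (J : Ideal Q) :
    ∃ K, (RingHom.ker π).map φ ≤ K ∧ J ⊓ K ≤ (RingHom.ker π).map φ ∧ J ⊔ K = ⊤ := by
  set N := (RingHom.ker π).map φ
  obtain ⟨K, ⟨hNK, hJK⟩, hmax⟩ := (wellFounded_gt (α := Submodule Q Q)).has_min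
    {K | N ≤ K ∧ J ⊓ K ≤ N} ⟨N, le_rfl, inf_le_right⟩
  refine ⟨K, hNK, hJK, ?_⟩
  set E := J ⊔ K
  have hEN : ∀ L, N ≤ L → E ⊓ L ≤ N → L ≤ N := by
    intro L hNL hEL
    have hKL : ¬ K < K ⊔ L := hmax (K ⊔ L) ⟨hNK.trans le_sup_left, ?_⟩
    · have hLK : L ≤ K := by
        by_contra hne
        exact hKL (left_lt_sup.2 hne)
      exact le_trans (le_inf (hLK.trans le_sup_right) le_rfl) hEL
    · rintro x ⟨hxJ, hxKL⟩
      obtain ⟨y, hy, l, hl, rfl⟩ := Submodule.mem_sup.1 hxKL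
      have hlE : l ∈ E := by
        have := E.sub_mem (Submodule.mem_sup_left hxJ) (Submodule.mem_sup_right hy)
        simpa using this
      exact hJK ⟨hxJ, K.add_mem hy (hNK (hEL ⟨hlE, hl⟩))⟩
  have hess : IsEssentialLeftIdeal ((E.comap φ).map π) := by
    intro I hI
    have hL := hEN ((I.comap π).map φ)
      (Ideal.map_mono fun x hx => by rw [Ideal.mem_comap, RingHom.mem_ker.1 hx]; exact I.zero_mem)
      (by
        rintro q ⟨hqE, hqL⟩
        obtain ⟨c, hc, x, hx, hcx⟩ := h.mem_map_iff.1 hqL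
        refine h.mem_map_iff.2 ⟨c, hc, x, ?_, hcx⟩
        refine Submodule.disjoint_def.1 hI _ (Ideal.mem_map_of_mem π ?_) hx
        rw [Ideal.mem_comap, ← hcx]
        exact E.mul_mem_left _ hqE)
    refine (Submodule.eq_bot_iff _).2 fun y hy => ?_
    obtain ⟨x, rfl⟩ := hπ y
    obtain ⟨c, hc, hcx⟩ := h.map_mem_map_iff.1
      (hL (Ideal.mem_map_of_mem φ (show x ∈ I.comap π from hy)))
    rw [RingHom.mem_ker, map_mul] at hcx
    exact ((hS c).1 hc).1 _ hcx
  obtain ⟨c, hcE, hc⟩ := exists_isRegElem_mem hG hsp hess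
  obtain ⟨c, hcE', rfl⟩ := (Ideal.mem_map_iff_of_surjective π hπ).1 hcE
  exact Ideal.eq_top_of_isUnit_mem E hcE' (h.isUnit c ((hS c).2 hc))

theorem isPrimeNC_comap (h : IsLeftLocalizationAt S φ) [IsNoetherianRing Q] {P : Ideal Q}
    (hP : P.IsPrimeNC) : (P.comap φ).IsPrimeNC := by
  refine ⟨Ideal.comap_ne_top φ hP.1, fun a ha r => ?_, fun a b hab => ?_⟩
  · rw [Ideal.mem_comap, map_mul]
    exact hP.2.1 _ ha _
  · let I : Ideal R :=
      { carrier := {x | ∀ r, φ (x * r * b) ∈ P}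
        add_mem' := fun {x y} hx hy r => by
          rw [add_mul, add_mul, map_add]; exact P.add_mem (hx r) (hy r)
        zero_mem' := fun r => by simp
        smul_mem' := fun c x hx r => by
          rw [smul_eq_mul, mul_assoc c, mul_assoc c, map_mul]; exact P.mul_mem_left _ (hx r) }
    have hI : I.IsTwoSidedNC := fun x hx r s => by
      rw [mul_assoc x r]; exact hx _
    refine hP.2.2 (φ a) (φ b) fun q => ?_
    obtain ⟨c, hc, x, hx, hcx⟩ := h.mem_map_iff.1
      (h.map_mul_mem hI (Ideal.mem_map_of_mem φ (show a ∈ I from hab)) q)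
    refine h.mem_of_mul_mem hc ?_
    rw [← mul_assoc, hcx, ← map_mul]
    simpa using hx 1

theorem primeRadical_eq_comap_jacobson (h : IsLeftLocalizationAt S φ) [IsArtinianRing Q] :
    primeRadical R = (Ring.jacobson Q).comap φ ∧ IsNilpotentIdeal (primeRadical R) := by
  have hle : primeRadical R ≤ (Ring.jacobson Q).comap φ := by
    refine le_trans ?_ (Ideal.comap_mono (primeRadical_le_jacobson Q))
    intro x hx
    refine Submodule.mem_sInf.2 fun P hP => ?_
    exact Submodule.mem_sInf.1 hx _ (h.isPrimeNC_comap hP)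
  obtain ⟨k, hk⟩ := IsSemiprimaryRing.isNilpotent (R := Q)
  have hpow : ∀ m : ℕ,
      ((Ring.jacobson Q).comap φ) ^ (m + 1) ≤ ((Ring.jacobson Q) ^ (m + 1)).comap φ := by
    intro m
    induction m with
    | zero => rw [zero_add, Submodule.pow_one, Submodule.pow_one]
    | succ m ih =>
      rw [Submodule.pow_succ' _ m.succ_ne_zero, Submodule.pow_succ' _ m.succ_ne_zero]
      refine Ideal.mul_le.2 fun x hx y hy => ?_
      rw [Ideal.mem_comap, map_mul]
      exact Ideal.mul_mem_mul hx (ih hy)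
  have hbot : ((Ring.jacobson Q).comap φ) ^ (k + 1) = ⊥ := by
    refine le_bot_iff.1 ((hpow k).trans fun x hx => ?_)
    rw [Ideal.mem_comap, Submodule.pow_succ, hk, zero_mul] at hx
    exact h.inj (by simpa using hx)
  have heq : primeRadical R = (Ring.jacobson Q).comap φ := by
    refine le_antisymm hle (le_primeRadical_of_pow_eq_bot (fun a ha r => ?_) hbot)
    rw [Ideal.mem_comap, map_mul]
    exact Ideal.mul_mem_right _ _ ha
  exact ⟨heq, k, heq ▸ hbot⟩

theorem isLeftGoldie (h : IsLeftLocalizationAt S φ) [IsNoetherianRing Q]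
    (hS : ∀ c ∈ S, IsRegElem (π c)) (hπ : Function.Surjective π) : IsLeftGoldie Rbar := by
  constructor
  · intro f hf hmono
    choose T hT using hf
    let g (i : ℕ) : Ideal R :=
      { carrier := {r | π r ∈ f i}
        add_mem' := fun {x y} hx hy => by
          rw [Set.mem_ofPred_eq, hT] at hx hy ⊢
          intro s hs
          rw [map_add, add_mul, hx s hs, hy s hs, add_zero]
        zero_mem' := by
          rw [Set.mem_ofPred_eq, hT]
          intro s _
          rw [map_zero, zero_mul]
        smul_mem' := fun c x hx => by
          rw [Set.mem_ofPred_eq, hT] at hx ⊢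
          intro s hs
          rw [smul_eq_mul, map_mul, mul_assoc, hx s hs, mul_zero] }
    have hmem : ∀ i r, r ∈ g i ↔ π r ∈ f i := fun i r => Iff.rfl
    obtain ⟨N, hN⟩ := h.acc_isSClosed g (fun i c hc r hr => by
      rw [hmem, hT] at hr ⊢
      intro s hs
      refine (hS c hc).1 _ ?_
      rw [← mul_assoc, ← map_mul]
      exact hr s hs) (fun i j hij r hr => hmono i j hij hr)
    refine ⟨N, fun k hk => Set.ext fun x => ?_⟩
    obtain ⟨r, rfl⟩ := hπ x
    rw [← hmem, ← hmem, hN k hk]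
  · rintro ⟨f, hf, hind⟩
    let I (k : ℕ) : Ideal R := (⨆ j < k, f j : Ideal Rbar).comap π
    have hImono : Monotone I := fun i j hij =>
      Ideal.comap_mono (biSup_mono fun m hm => hm.trans_le hij)
    obtain ⟨N, hN⟩ := h.acc_isSClosed (fun k => ((I k).map φ).comap φ)
      (fun k => h.isSClosed_comap _)
      (fun i j hij => Ideal.comap_mono (Ideal.map_mono (hImono hij)))
    obtain ⟨x, hx, hx0⟩ := Submodule.exists_mem_ne_zero_of_ne_bot (hf N)
    obtain ⟨r, rfl⟩ := hπ x
    have hr : r ∈ ((I (N + 1)).map φ).comap φ :=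
      Ideal.le_comap_map (show r ∈ I (N + 1) from
        Submodule.mem_iSup_of_mem N (Submodule.mem_iSup_of_mem N.lt_succ_self hx))
    rw [hN (N + 1) N.le_succ] at hr
    obtain ⟨c, hc, hcr⟩ := h.map_mem_map_iff.1 hr
    have hcr' : π c * π r ∈ (⨆ j < N, f j : Ideal Rbar) := by
      rw [← map_mul]; exact hcr
    refine hx0 ((hS c hc).1 _ (Submodule.disjoint_def.1 (hind N) _
      ((f N).smul_mem (π c) hx) ?_))
    exact (biSup_mono fun m hm => ne_of_lt hm : (⨆ j < N, f j) ≤ ⨆ j, ⨆ (_ : j ≠ N), f j) hcr'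

end IsLeftLocalizationAt

end Criterion

section Equivalence

variable {R Q : Type*} [Ring R] [Ring Q] {Rbar : Type*} [Ring Rbar] {S : Submonoid R}
  {φ : R →+* Q} {π : R →+* Rbar}

theorem isUnit_of_forall_mul_mem_jacobson [IsArtinianRing Q] {c : Q}
    (hc : ∀ q, q * c ∈ Ring.jacobson Q → q ∈ Ring.jacobson Q) : IsUnit c := by
  have hreg : IsUnit (Ideal.Quotient.mk (Ring.jacobson Q) c) := by
    refine IsArtinianRing.isUnit_iff_isRightRegular.2 (isRightRegular_of_non_zero_divisor _ ?_)
    intro q hq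
    obtain ⟨q, rfl⟩ := Ideal.Quotient.mk_surjective q
    rw [← map_mul, Ideal.Quotient.eq_zero_iff_mem] at hq
    exact Ideal.Quotient.eq_zero_iff_mem.2 (hc q hq)
  obtain ⟨x, hx⟩ := hreg.exists_left_inv
  obtain ⟨x, rfl⟩ := Ideal.Quotient.mk_surjective x
  rw [← map_mul, ← map_one (Ideal.Quotient.mk (Ring.jacobson Q)), Ideal.Quotient.eq,
    ← Ideal.jacobson_bot] at hx
  obtain ⟨s, hs⟩ := Ideal.exists_mul_sub_mem_of_sub_one_mem_jacobson _ hx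
  rw [Ideal.mem_bot, sub_eq_zero, ← mul_assoc] at hs
  exact IsUnit.of_mul_eq_one_right _ hs

namespace IsLeftLocalizationAt

theorem isRegElem_map_iff (h : IsLeftLocalizationAt (regSubmonoid R) φ) [IsArtinianRing Q]
    (hπ : Function.Surjective π) (hker : RingHom.ker π = primeRadical R) {c : R} :
    IsRegElem (π c) ↔ IsRegElem c := by
  have hmem : ∀ x, π x = 0 ↔ φ x ∈ Ring.jacobson Q := fun x => by
    rw [← RingHom.mem_ker, hker, h.primeRadical_eq_comap_jacobson.1, Ideal.mem_comap]
  constructor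
  · intro hc
    have hu : IsUnit (φ c) := isUnit_of_forall_mul_mem_jacobson fun q hq => by
      obtain ⟨d, hd, r, hr⟩ := h.denom q
      have hr' : φ r ∈ Ring.jacobson Q := by
        refine (hmem r).1 (hc.2 _ ?_)
        rw [← map_mul, hmem, map_mul, ← hr, mul_assoc]
        exact Ideal.mul_mem_left _ _ hq
      refine h.mem_of_mul_mem hd ?_
      rwa [hr]
    refine ⟨fun x hx => h.inj ?_, fun x hx => h.inj ?_⟩
    · rw [map_zero]
      exact hu.mul_right_eq_zero.1 (by rw [← map_mul, hx, map_zero])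
    · rw [map_zero]
      exact hu.mul_left_eq_zero.1 (by rw [← map_mul, hx, map_zero])
  · intro hc
    obtain ⟨u, hu⟩ := h.isUnit c hc
    refine ⟨fun x hx => ?_, fun x hx => ?_⟩ <;> obtain ⟨x, rfl⟩ := hπ x <;>
      rw [← map_mul, hmem, map_mul, ← hu] at hx <;> rw [hmem]
    · simpa using Ideal.mul_mem_left _ (↑u⁻¹ : Q) hx
    · simpa using Ideal.mul_mem_right (↑u⁻¹ : Q) _ hx

theorem exists_mul_eq_mul_of_mem_primeRadical (h : IsLeftLocalizationAt S φ) [IsArtinianRing Q]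
    {c m : R} (hc : c ∈ S) (hm : m ∈ primeRadical R) :
    ∃ d ∈ S, ∃ b ∈ primeRadical R, d * m = b * c := by
  have hmem := h.primeRadical_eq_comap_jacobson.1
  obtain ⟨d, hd, b, hb⟩ := h.exists_denom_mul (φ m) hc
  refine ⟨d, hd, b, ?_, h.inj (by rw [map_mul, map_mul, hb])⟩
  obtain ⟨u, hu⟩ := h.isUnit c hc
  rw [hmem, Ideal.mem_comap] at hm ⊢
  have : φ b = φ d * φ m * (↑u⁻¹ : Q) := by
    rw [hb, ← hu, Units.mul_inv_cancel_right]
  rw [this]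
  exact Ideal.mul_mem_right _ _ (Ideal.mul_mem_left _ _ hm)

theorem isArtinianRing (h : IsLeftLocalizationAt S φ) [IsNoetherianRing Q]
    (hS : ∀ c, c ∈ S ↔ IsRegElem (π c)) (hπ : Function.Surjective π)
    (hker : RingHom.ker π = primeRadical R) (hG : IsLeftGoldie Rbar)
    (hnil : IsNilpotentIdeal (primeRadical R)) : IsArtinianRing Q := by
  obtain ⟨k, hk⟩ := hnil
  refine isArtinianRing_of_exists_complement (N := (RingHom.ker π).map φ) (k := k) ?_
    fun J _ => h.exists_complement hS hπ hG (isSemiprimeElementwise_of_ker_eq hπ hker) J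
  refine le_bot_iff.1 ((h.map_pow_le (isTwoSidedNC_ker π) k).trans ?_)
  rw [hker, hk, Ideal.map_bot]

theorem isUnit_of_isRegElem (h : IsLeftLocalizationAt S φ) [IsArtinianRing Q] {c : R}
    (hc : IsRegElem c) : IsUnit (φ c) := by
  refine IsArtinianRing.isUnit_iff_isRightRegular.2 (isRightRegular_of_non_zero_divisor _ ?_)
  intro q hq
  obtain ⟨d, hd, r, hr⟩ := h.denom q
  have hr0 : r = 0 := hc.2 r (h.inj (by rw [map_mul, ← hr, mul_assoc, hq, mul_zero, map_zero]))
  rw [hr0, map_zero] at hr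
  exact (h.isUnit d hd).mul_right_eq_zero.1 hr

theorem numeratorRingHom [OreLocalization.OreSet S] (hS : ∀ c ∈ S, IsRegElem c) :
    IsLeftLocalizationAt S (OreLocalization.numeratorRingHom (R := R) (S := S)) where
  inj := OreLocalization.numeratorHom_inj fun c hc => fun x hx => (hS c hc).1 x hx
  isUnit c hc := OreLocalization.numerator_isUnit (⟨c, hc⟩ : S)
  denom q := by
    induction q using OreLocalization.ind with
    | _ r s =>
      exact ⟨s, s.2, r, OreLocalization.mul_cancel⟩

end IsLeftLocalizationAt

theorem nonempty_oreSet_comap_regSubmonoid (hπ : Function.Surjective π)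
    (hker : RingHom.ker π = primeRadical R) (hG : IsLeftGoldie Rbar)
    (hreg : ∀ c, IsRegElem (π c) → IsRegElem c)
    (hn : ∀ c : R, IsRegElem (π c) → ∀ m ∈ primeRadical R,
      ∃ c₁ : R, IsRegElem (π c₁) ∧ ∃ m₁ ∈ primeRadical R, c₁ * m = m₁ * c) :
    Nonempty (OreLocalization.OreSet ((regSubmonoid Rbar).comap π)) := by
  refine OreLocalization.nonempty_oreSet_iff.2 ⟨fun r₁ r₂ s hs => ⟨1, ?_⟩, fun a ⟨c, hc⟩ => ?_⟩
  · congr 1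
    refine sub_eq_zero.1 ((hreg s s.2).2 _ ?_)
    rw [sub_mul, hs, sub_self]
  · obtain ⟨d, b, hd, hdb⟩ :=
      exists_mul_eq_mul_of_isRegElem hG (isSemiprimeElementwise_of_ker_eq hπ hker) hc (π a)
    obtain ⟨d, rfl⟩ := hπ d
    obtain ⟨b, rfl⟩ := hπ b
    have hm : d * a - b * c ∈ primeRadical R := by
      rw [← hker, RingHom.mem_ker, map_sub, map_mul, map_mul, hdb, sub_self]
    obtain ⟨c₁, hc₁, m₁, -, h⟩ := hn c hc _ hm
    refine ⟨c₁ * b + m₁, ⟨c₁ * d, ?_⟩, ?_⟩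
    · exact ((regSubmonoid Rbar).comap π).mul_mem hc₁ hd
    · change c₁ * d * a = (c₁ * b + m₁) * c
      rw [add_mul, ← h, mul_sub, mul_assoc, mul_assoc, add_sub_cancel]

end Equivalence

/-- **Theorem (`4Sep12`; a weakened Robson criterion).** Let `R` be a ring, `n` its prime
radical, `R̄ = R/n` (realized by a surjective `π` with kernel `n`).  TFAE:
(1) `R` has a left Artinian left quotient ring;
(2) (a) `R̄` is a left Goldie ring, (b) `n` is a nilpotent ideal, (c) `C' ⊆ C`,
(d) for all `c ∈ C'` and `m ∈ n` there are `c₁ ∈ C'` and `m₁ ∈ n` with `c₁ m = m₁ c`, and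
(e) `R` satisfies the ACC on `C'`-closed left ideals. -/
theorem left_artinian_left_quotient_ring_criterion_robson_weak
    {R : Type u} [Ring R] (Rbar : Type v) [Ring Rbar] (π : R →+* Rbar)
    (hπsurj : Function.Surjective π) (hπker : RingHom.ker π = primeRadical R) :
    HasArtinianLeftQuot R ↔
      (IsLeftGoldie Rbar ∧
        IsNilpotentIdeal (primeRadical R) ∧
        (∀ c : R, IsRegElem (π c) → IsRegElem c) ∧
        (∀ c : R, IsRegElem (π c) → ∀ m ∈ primeRadical R,
          ∃ c₁ : R, IsRegElem (π c₁) ∧ ∃ m₁ ∈ primeRadical R, c₁ * m = m₁ * c) ∧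
        (∀ f : ℕ → Ideal R,
          (∀ i, IsSClosedLeftIdeal {c : R | IsRegElem (π c)} (f i)) →
          (∀ i j, i ≤ j → f i ≤ f j) → ∃ N, ∀ k, N ≤ k → f k = f N)) := by
  constructor
  · rintro ⟨d, _⟩
    have h : IsLeftLocalizationAt (regSubmonoid R) d.φ :=
      ⟨d.quot.inj, d.quot.isUnit, fun q => by
        obtain ⟨c, r, hc, hr⟩ := d.quot.denom q
        exact ⟨c, hc, r, hr⟩⟩
    have hreg : ∀ c, IsRegElem (π c) ↔ IsRegElem c := fun _ => h.isRegElem_map_iff hπsurj hπker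
    refine ⟨h.isLeftGoldie (fun c hc => (hreg c).2 hc) hπsurj,
      h.primeRadical_eq_comap_jacobson.2, fun c => (hreg c).1, fun c hc m hm => ?_,
      fun f hf hmono => h.acc_isSClosed f (fun i c hc => hf i c ((hreg c).2 hc)) hmono⟩
    obtain ⟨c₁, hc₁, m₁, hm₁, heq⟩ :=
      h.exists_mul_eq_mul_of_mem_primeRadical ((hreg c).1 hc) hm
    exact ⟨c₁, (hreg c₁).2 hc₁, m₁, hm₁, heq⟩
  · rintro ⟨hG, hnil, hreg, hn, hacc⟩
    obtain ⟨_⟩ := nonempty_oreSet_comap_regSubmonoid hπsurj hπker hG hreg hn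
    have h := IsLeftLocalizationAt.numeratorRingHom (S := (regSubmonoid Rbar).comap π) hreg
    have := h.isNoetherianRing hacc
    have := h.isArtinianRing (fun _ => Iff.rfl) hπsurj hπker hG hnil
    refine ⟨⟨_, _, h.inj, fun c hc => h.isUnit_of_isRegElem hc, fun q => ?_⟩, this⟩
    obtain ⟨c, hc, r, hr⟩ := h.denom q
    exact ⟨c, r, hreg c hc, hr⟩
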